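/- arXiv:1603.06552 — 3 statements merged into one kernel-verified Lean document; each statement's English description precedes it below -/
import Mathlib

section
/- Let F be an hke collection with α(F) = α, let A ∈ F, and let D be an arbitrary finite set. Then F ∪ {D} is an hke collection if and only if |D| = α and for every partition {Γ₁, Γ₂} of F − {A} with Γ₂ nonempty, |A ∩ D ∩ ⋂Γ₁ − ⋃Γ₂| = |⋂Γ₂ − ⋃Γ₁ − A − D| (where, if Γ₁ = ∅, the term ⋂Γ₁ is ignored, i.e., the left side is |A ∩ D − ⋃Γ₂| and the right side is |⋂Γ₂ − A − D|). -/
open Finset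

/-- The union of a finite collection of finite sets. -/
def famUnion (Γ : Finset (Finset ℕ)) : Finset ℕ := Γ.sup id

/-- The intersection of a finite collection of finite sets
(equal to the usual intersection when the collection is nonempty). -/
def famInter (Γ : Finset (Finset ℕ)) : Finset ℕ :=
  (Γ.sup id).filter (fun x => ∀ A ∈ Γ, x ∈ A)

/-- `F` is a hereditary König–Egerváry (hke) collection with `α(F) = α`:
`α` is a positive integer and `|⋃Γ| + |⋂Γ| = 2α` for every nonempty subcollection `Γ` of `F`. -/
def IsHKE (F : Finset (Finset ℕ)) (α : ℕ) : Prop :=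
  0 < α ∧ ∀ Γ ⊆ F, Γ.Nonempty → (famUnion Γ).card + (famInter Γ).card = 2 * α

/-!
For a nonempty collection `P`, adding a set `X` changes `|⋃P| + |⋂P|` by `|X \ ⋃P| - |⋂P \ X|`.
Hence `F` is hke exactly when its members all have `α` elements and `|⋂P \ ⋃Q| = |⋂Q \ ⋃P|` for all
nonempty `P, Q ⊆ F`; call such `P` and `Q` balanced. Cutting `⋂P \ ⋃Q` along `X` shows that if two
of the pairs `(P, Q)`, `(P ∪ {X}, Q)`, `(P, Q ∪ {X})` are balanced, so is the third. The partition
condition says that `{A, D} ∪ Γ₁` and `Γ₂` are balanced when `Γ₁ ∪ Γ₂ = F \ {A}`; the two-of-three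
rule first extends this to disjoint `Γ₁, Γ₂ ⊆ F \ {A}`, and then, starting from `|A \ D| = |D \ A|`,
shows that every nonempty `Γ ⊆ F` is balanced with `{D}`.
-/

section

variable {F P Q Γ : Finset (Finset ℕ)} {A D X : Finset ℕ} {α : ℕ}

lemma famUnion_singleton (X : Finset ℕ) : famUnion {X} = X := by
  simp [famUnion]

lemma famUnion_insert (X : Finset ℕ) (P : Finset (Finset ℕ)) :
    famUnion (insert X P) = X ∪ famUnion P := by
  simp [famUnion]

lemma mem_famInter (hP : P.Nonempty) {x : ℕ} : x ∈ famInter P ↔ ∀ S ∈ P, x ∈ S := by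
  obtain ⟨S, hS⟩ := hP
  simp only [famInter, mem_filter, mem_sup, id_eq, and_iff_right_iff_imp]
  exact fun hx => ⟨S, hS, hx S hS⟩

lemma famInter_singleton (X : Finset ℕ) : famInter {X} = X := by
  ext x
  simp [mem_famInter]

lemma famInter_insert (hP : P.Nonempty) (X : Finset ℕ) :
    famInter (insert X P) = X ∩ famInter P := by
  ext x
  simp [mem_famInter, hP]

lemma famInter_pair_union (A D : Finset ℕ) (P : Finset (Finset ℕ)) :
    famInter ({A, D} ∪ P) = if P = ∅ then A ∩ D else A ∩ D ∩ famInter P := by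
  split_ifs with hP
  · rw [hP, union_empty, famInter_insert (singleton_nonempty D), famInter_singleton]
  · rw [insert_union, singleton_union, famInter_insert (insert_nonempty D P),
      famInter_insert (nonempty_iff_ne_empty.mpr hP), inter_assoc]

lemma famUnion_pair_union (A D : Finset ℕ) (P : Finset (Finset ℕ)) :
    famUnion ({A, D} ∪ P) = A ∪ (D ∪ famUnion P) := by
  rw [insert_union, singleton_union, famUnion_insert, famUnion_insert]

lemma card_famInter_sdiff_famUnion_eq_add (hP : P.Nonempty) (Q : Finset (Finset ℕ))
    (X : Finset ℕ) :
    #(famInter P \ famUnion Q) =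
      #(famInter (insert X P) \ famUnion Q) + #(famInter P \ famUnion (insert X Q)) := by
  have inside_eq : (X ∩ famInter P) \ famUnion Q = (famInter P \ famUnion Q) ∩ X := by
    grind
  have outside_eq : famInter P \ (X ∪ famUnion Q) = (famInter P \ famUnion Q) \ X := by
    grind
  rw [famInter_insert hP, famUnion_insert, inside_eq, outside_eq, card_inter_add_card_sdiff]

/-- The collections `P` and `Q` are balanced if as many points lie in all members of `P` and in no
member of `Q` as the other way round. Since `famInter ∅ = ∅`, this is the intended notion only for
nonempty `P` and `Q`. -/
def IsBalanced (P Q : Finset (Finset ℕ)) : Prop :=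
  #(famInter P \ famUnion Q) = #(famInter Q \ famUnion P)

lemma isBalanced_singleton_singleton (h : #A = #D) : IsBalanced {A} {D} := by
  simpa only [IsBalanced, famInter_singleton, famUnion_singleton] using card_sdiff_comm h

lemma isBalanced_pair_union_iff :
    IsBalanced ({A, D} ∪ P) Q ↔
      (if P = ∅ then #((A ∩ D) \ famUnion Q) else #((A ∩ D ∩ famInter P) \ famUnion Q)) =
        #(((famInter Q \ famUnion P) \ A) \ D) := by
  have sdiff_union_eq :
      famInter Q \ (A ∪ (D ∪ famUnion P)) = ((famInter Q \ famUnion P) \ A) \ D := by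
    grind
  rw [IsBalanced, famInter_pair_union, famUnion_pair_union, sdiff_union_eq]
  split_ifs <;> rfl

lemma card_famUnion_add_card_famInter_insert_eq_iff (hΓ : Γ.Nonempty) :
    #(famUnion (insert X Γ)) + #(famInter (insert X Γ)) = #(famUnion Γ) + #(famInter Γ) ↔
      IsBalanced Γ {X} := by
  have card_union : #(X \ famUnion Γ) + #(famUnion Γ) = #(X ∪ famUnion Γ) :=
    card_sdiff_add_card X (famUnion Γ)
  have card_inter : #(X ∩ famInter Γ) + #(famInter Γ \ X) = #(famInter Γ) := by
    rw [inter_comm, card_inter_add_card_sdiff]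
  rw [IsBalanced, famUnion_insert, famInter_insert hΓ, famUnion_singleton, famInter_singleton]
  omega

namespace IsBalanced

lemma symm (h : IsBalanced P Q) : IsBalanced Q P :=
  Eq.symm h

lemma insert_right (hP : P.Nonempty) (hQ : Q.Nonempty) (h : IsBalanced P Q)
    (h_left : IsBalanced (insert X P) Q) : IsBalanced P (insert X Q) := by
  have split_left := card_famInter_sdiff_famUnion_eq_add hP Q X
  have split_right := card_famInter_sdiff_famUnion_eq_add hQ P X
  unfold IsBalanced at *
  omega

lemma insert_left (hP : P.Nonempty) (hQ : Q.Nonempty) (h : IsBalanced P Q)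
    (h_right : IsBalanced P (insert X Q)) : IsBalanced (insert X P) Q :=
  (h.symm.insert_right hQ hP h_right.symm).symm

lemma of_insert (hP : P.Nonempty) (hQ : Q.Nonempty) (h_left : IsBalanced (insert X P) Q)
    (h_right : IsBalanced P (insert X Q)) : IsBalanced P Q := by
  have split_left := card_famInter_sdiff_famUnion_eq_add hP Q X
  have split_right := card_famInter_sdiff_famUnion_eq_add hQ P X
  unfold IsBalanced at *
  omega

end IsBalanced

lemma isBalanced_union_of_forall_partition {C E : Finset (Finset ℕ)} (hC : C.Nonempty)
    (hE : ∀ P Q, Disjoint P Q → P ∪ Q = E → Q.Nonempty → IsBalanced (C ∪ P) Q)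
    (hPQ : Disjoint P Q) (hPE : P ⊆ E) (hQE : Q ⊆ E) (hQ : Q.Nonempty) :
    IsBalanced (C ∪ P) Q := by
  induction hn : #(E \ (P ∪ Q)) generalizing P Q with
  | zero =>
    exact hE P Q hPQ ((union_subset hPE hQE).antisymm
      (sdiff_eq_empty_iff_subset.mp (card_eq_zero.mp hn))) hQ
  | succ n ih =>
    obtain ⟨X, hX⟩ : (E \ (P ∪ Q)).Nonempty := card_pos.mp (by omega)
    have hXE : X ∈ E := (mem_sdiff.mp hX).1
    have hXPQ : X ∉ P ∧ X ∉ Q := by simpa using (mem_sdiff.mp hX).2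
    have card_remaining : #(E \ insert X (P ∪ Q)) = n := by
      rw [sdiff_insert, card_erase_of_mem hX, hn, Nat.add_sub_cancel]
    have h_left : IsBalanced (C ∪ insert X P) Q :=
      ih (disjoint_insert_left.mpr ⟨hXPQ.2, hPQ⟩) (insert_subset hXE hPE) hQE hQ
        (by rwa [insert_union])
    have h_right : IsBalanced (C ∪ P) (insert X Q) :=
      ih (disjoint_insert_right.mpr ⟨hXPQ.1, hPQ⟩) hPE (insert_subset hXE hQE)
        (insert_nonempty X Q) (by rwa [union_insert])
    rw [union_insert] at h_left
    exact h_left.of_insert (hC.mono subset_union_left) hQ h_right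

namespace IsHKE

lemma card_eq (hF : IsHKE F α) (hA : A ∈ F) : #A = α := by
  have h := hF.2 {A} (singleton_subset_iff.mpr hA) (singleton_nonempty A)
  rw [famUnion_singleton, famInter_singleton] at h
  omega

lemma isBalanced (hF : IsHKE F α) (hP : P.Nonempty) (hQ : Q.Nonempty) (hPF : P ⊆ F)
    (hQF : Q ⊆ F) : IsBalanced P Q := by
  induction hQ using Nonempty.cons_induction generalizing P with
  | singleton X =>
    have hXP : insert X P ⊆ F := insert_subset (singleton_subset_iff.mp hQF) hPF
    rw [← card_famUnion_add_card_famInter_insert_eq_iff hP, hF.2 P hPF hP,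
      hF.2 (insert X P) hXP (insert_nonempty X P)]
  | cons X Q hXQ hQ ih =>
    rw [cons_eq_insert] at hQF ⊢
    obtain ⟨hXF, hQF⟩ := insert_subset_iff.mp hQF
    exact (ih hP hPF hQF).insert_right hP hQ
      (ih (insert_nonempty X P) (insert_subset hXF hPF) hQF)

lemma insert_of_forall_isBalanced (hF : IsHKE F α) (hD : #D = α)
    (hFD : ∀ Γ ⊆ F, Γ.Nonempty → IsBalanced Γ {D}) : IsHKE (insert D F) α := by
  refine ⟨hF.1, fun Γ hΓF hΓ => ?_⟩
  by_cases hDΓ : D ∈ Γ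
  · rw [← insert_erase hDΓ]
    have hEF : Γ.erase D ⊆ F := subset_insert_iff.mp hΓF
    rcases (Γ.erase D).eq_empty_or_nonempty with hE | hE
    · rw [hE, insert_empty_eq, famUnion_singleton, famInter_singleton, hD, two_mul]
    · rw [(card_famUnion_add_card_famInter_insert_eq_iff hE).mpr (hFD _ hEF hE),
        hF.2 _ hEF hE]
  · exact hF.2 Γ ((subset_insert_iff_of_notMem hDΓ).mp hΓF) hΓ

lemma isBalanced_insert_singleton (hF : IsHKE F α) (hA : A ∈ F) (hD : #D = α)
    (hAD : ∀ P Q, Disjoint P Q → P ⊆ F.erase A → Q ⊆ F.erase A → Q.Nonempty →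
      IsBalanced ({A, D} ∪ P) Q)
    (hP : P ⊆ F.erase A) : IsBalanced (insert A P) {D} := by
  induction P using Finset.induction_on with
  | empty => exact isBalanced_singleton_singleton ((hF.card_eq hA).trans hD.symm)
  | insert X P hXP ih =>
    obtain ⟨hXE, hPE⟩ := insert_subset_iff.mp hP
    have hPF : P ⊆ F := hPE.trans (erase_subset A F)
    have hX : IsBalanced (insert A P) {X} :=
      hF.isBalanced (insert_nonempty A P) (singleton_nonempty X) (insert_subset hA hPF)
        (singleton_subset_iff.mpr (mem_of_mem_erase hXE))
    have hDX : IsBalanced (insert D (insert A P)) {X} := by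
      simpa only [insert_union, singleton_union, insert_comm] using
        hAD P {X} (disjoint_singleton_right.mpr hXP) hPE (singleton_subset_iff.mpr hXE)
          (singleton_nonempty X)
    have hXD : IsBalanced (insert A P) {X, D} := by
      rw [pair_comm]
      exact hX.insert_right (insert_nonempty A P) (singleton_nonempty X) hDX
    rw [insert_comm]
    exact (ih hPE).insert_left (insert_nonempty A P) (singleton_nonempty D) hXD

lemma isBalanced_singleton (hF : IsHKE F α) (hA : A ∈ F) (hD : #D = α)
    (hAD : ∀ P Q, Disjoint P Q → P ⊆ F.erase A → Q ⊆ F.erase A → Q.Nonempty →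
      IsBalanced ({A, D} ∪ P) Q)
    (hΓF : Γ ⊆ F) (hΓ : Γ.Nonempty) : IsBalanced Γ {D} := by
  by_cases hAΓ : A ∈ Γ
  · rw [← insert_erase hAΓ]
    exact hF.isBalanced_insert_singleton hA hD hAD (erase_subset_erase A hΓF)
  · have hΓE : Γ ⊆ F.erase A := subset_erase.mpr ⟨hΓF, hAΓ⟩
    have hADΓ : IsBalanced {A, D} Γ := by
      simpa only [union_empty] using
        hAD ∅ Γ (disjoint_empty_left Γ) (empty_subset _) hΓE hΓ
    exact (hF.isBalanced_insert_singleton hA hD hAD hΓE).of_insert hΓ (singleton_nonempty D)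
      hADΓ.symm

end IsHKE

end

/-- for an hke collection `F` with `α(F) = α`, `A ∈ F` and an arbitrary
finite set `D`, the collection `F ∪ {D}` is an hke collection iff `|D| = α` and for
every partition `{Γ₁, Γ₂}` of `F − {A}` with `Γ₂` nonempty,
`|A ∩ D ∩ ⋂Γ₁ − ⋃Γ₂| = |⋂Γ₂ − ⋃Γ₁ − A − D|`
(where, if `Γ₁ = ∅`, the left side is `|A ∩ D − ⋃Γ₂|`). -/
theorem insert_isHKE_iff (F : Finset (Finset ℕ)) (α : ℕ) (hF : IsHKE F α)
    (A : Finset ℕ) (hA : A ∈ F) (D : Finset ℕ) :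
    (∃ β, IsHKE (insert D F) β) ↔
      (D.card = α ∧
        ∀ Γ₁ Γ₂ : Finset (Finset ℕ), Disjoint Γ₁ Γ₂ → Γ₁ ∪ Γ₂ = F.erase A →
          Γ₂.Nonempty →
          (if Γ₁ = ∅ then ((A ∩ D) \ famUnion Γ₂).card
            else ((A ∩ D ∩ famInter Γ₁) \ famUnion Γ₂).card)
          = (((famInter Γ₂ \ famUnion Γ₁) \ A) \ D).card) := by
  constructor
  · rintro ⟨β, hβ⟩
    obtain rfl : β = α := (hβ.card_eq (mem_insert_of_mem hA)).symm.trans (hF.card_eq hA)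
    refine ⟨hβ.card_eq (mem_insert_self D F), fun Γ₁ Γ₂ _ hΓ hΓ₂ => ?_⟩
    obtain ⟨hΓ₁F, hΓ₂F⟩ : Γ₁ ⊆ F ∧ Γ₂ ⊆ F :=
      union_subset_iff.mp (hΓ.trans_subset (erase_subset A F))
    have hADΓ₁ : {A, D} ∪ Γ₁ ⊆ insert D F := by
      grind
    exact isBalanced_pair_union_iff.mp
      (hβ.isBalanced (by simp) hΓ₂ hADΓ₁ (hΓ₂F.trans (subset_insert D F)))
  · rintro ⟨hD, hAD⟩
    refine ⟨α, hF.insert_of_forall_isBalanced hD fun Γ hΓF hΓ =>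
      hF.isBalanced_singleton hA hD ?_ hΓF hΓ⟩
    exact fun P Q => isBalanced_union_of_forall_partition (insert_nonempty A {D})
      fun Γ₁ Γ₂ hdisj hΓ hΓ₂ => isBalanced_pair_union_iff.mpr (hAD Γ₁ Γ₂ hdisj hΓ hΓ₂)
end

section
/- Let F' = {A, B, D} be a collection of three distinct finite sets all of the same cardinality α. Then F' is an hke collection if and only if |A ∩ D − B| = |B − A − D|. -/
open Finset

/-!
Singletons force the three sets to have cardinality `α`, and pairs then impose nothing new because
`|A ∪ B| + |A ∩ B| = |A| + |B|`. For the whole triple, start from the pair `{A, D}`: adjoining `B`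
enlarges the union by `|B - A - D|` and shrinks the intersection by `|A ∩ D - B|`, so the sum stays
`2α` exactly when these two numbers agree.
-/

section FinsetLemmas

variable {ι : Type*}

theorem card_pos_of_ne_of_card_eq {s t : Finset ι} (hne : s ≠ t) (hcard : #s = #t) : 0 < #s := by
  by_contra! hs
  have hs_empty : s = ∅ := card_eq_zero.mp (Nat.le_zero.mp hs)
  have ht_empty : t = ∅ := card_eq_zero.mp (Nat.le_zero.mp (hcard ▸ hs))
  exact hne (hs_empty.trans ht_empty.symm)

theorem forall_nonempty_subset_singleton_iff {a : ι} {P : Finset ι → Prop} :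
    (∀ t ⊆ {a}, t.Nonempty → P t) ↔ P {a} := by
  refine ⟨fun h => h {a} Subset.rfl (singleton_nonempty a), fun h t ht htne => ?_⟩
  rwa [htne.subset_singleton_iff.mp ht]

variable [DecidableEq ι]

theorem forall_nonempty_subset_insert_iff {a : ι} {s : Finset ι} {P : Finset ι → Prop} :
    (∀ t ⊆ insert a s, t.Nonempty → P t) ↔
      P {a} ∧ ∀ t ⊆ s, t.Nonempty → P t ∧ P (insert a t) := by
  constructor
  · intro h
    refine ⟨h {a} (by simp) (singleton_nonempty a), fun t ht htne => ⟨?_, ?_⟩⟩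
    · exact h t (ht.trans (subset_insert a s)) htne
    · exact h (insert a t) (insert_subset_insert a ht) (insert_nonempty a t)
  · rintro ⟨hsingleton, hsubset⟩ t ht htne
    have herase : t.erase a ⊆ s := subset_insert_iff.mp ht
    by_cases ha : a ∈ t
    · rcases (t.erase a).eq_empty_or_nonempty with hempty | hne
      · rwa [← insert_erase ha, hempty]
      · rw [← insert_erase ha]
        exact (hsubset _ herase hne).2
    · rw [erase_eq_of_notMem ha] at herase
      exact (hsubset t herase htne).1

theorem card_union_union_add_card_inter_inter_add (A B D : Finset ι) :
    #(A ∪ (B ∪ D)) + #(A ∩ (B ∩ D)) + #((A ∩ D) \ B) = #A + #D + #((B \ A) \ D) := by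
  have hunion : #(A ∪ (B ∪ D)) = #((B \ A) \ D) + #(A ∪ D) := by
    rw [sdiff_sdiff_left, sup_eq_union, card_sdiff_add_card, union_left_comm]
  have hinter : #(A ∩ (B ∩ D)) + #((A ∩ D) \ B) = #(A ∩ D) := by
    rw [← card_inter_add_card_sdiff (A ∩ D) B, inter_assoc, inter_comm D]
  have hpair := card_union_add_card_inter A D
  lia

end FinsetLemmas

section Collections

variable {Γ : Finset (Finset ℕ)} {A : Finset ℕ}

theorem famUnion_singleton_s8 : famUnion {A} = A :=
  sup_singleton

theorem famUnion_insert_s8 : famUnion (insert A Γ) = A ∪ famUnion Γ :=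
  sup_insert

theorem mem_famInter_iff (hΓ : Γ.Nonempty) {x : ℕ} : x ∈ famInter Γ ↔ ∀ A ∈ Γ, x ∈ A := by
  obtain ⟨A, hA⟩ := hΓ
  simp only [famInter, mem_filter, mem_sup, id_eq, and_iff_right_iff_imp]
  exact fun hx => ⟨A, hA, hx A hA⟩

theorem famInter_singleton_s8 : famInter {A} = A := by
  ext x
  simp [mem_famInter_iff]

theorem famInter_insert_s8 (hΓ : Γ.Nonempty) : famInter (insert A Γ) = A ∩ famInter Γ := by
  ext x
  simp [mem_famInter_iff, hΓ]

theorem card_famUnion_add_card_famInter_singleton (A : Finset ℕ) :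
    #(famUnion {A}) + #(famInter {A}) = 2 * #A := by
  rw [famUnion_singleton_s8, famInter_singleton_s8, two_mul]

theorem card_famUnion_add_card_famInter_pair (A B : Finset ℕ) :
    #(famUnion {A, B}) + #(famInter {A, B}) = #A + #B := by
  rw [famUnion_insert_s8, famUnion_singleton_s8, famInter_insert_s8 (singleton_nonempty B),
    famInter_singleton_s8, card_union_add_card_inter]

theorem card_famUnion_add_card_famInter_triple_add (A B D : Finset ℕ) :
    #(famUnion {A, B, D}) + #(famInter {A, B, D}) + #((A ∩ D) \ B) =
      #A + #D + #((B \ A) \ D) := by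
  rw [famUnion_insert_s8, famUnion_insert_s8, famUnion_singleton_s8,
    famInter_insert_s8 (insert_nonempty B {D}), famInter_insert_s8 (singleton_nonempty D),
    famInter_singleton_s8, card_union_union_add_card_inter_inter_add]

theorem triple_isHKE_iff_general (A B D : Finset ℕ) (α : ℕ) :
    IsHKE {A, B, D} α ↔
      0 < α ∧ #A = α ∧ #B = α ∧ #D = α ∧ #((A ∩ D) \ B) = #((B \ A) \ D) := by
  have htriple := card_famUnion_add_card_famInter_triple_add A B D
  simp only [IsHKE, forall_nonempty_subset_insert_iff, forall_nonempty_subset_singleton_iff,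
    card_famUnion_add_card_famInter_singleton, card_famUnion_add_card_famInter_pair]
  lia

end Collections

/-- a collection `{A, B, D}` of three distinct finite sets of the same
cardinality `α` is an hke collection iff `|A ∩ D − B| = |B − A − D|`. -/
theorem triple_isHKE_iff (A B D : Finset ℕ) (α : ℕ)
    (hAB : A ≠ B) (hAD : A ≠ D) (hBD : B ≠ D)
    (hA : A.card = α) (hB : B.card = α) (hD : D.card = α) :
    (∃ β, IsHKE ({A, B, D} : Finset (Finset ℕ)) β) ↔
      ((A ∩ D) \ B).card = ((B \ A) \ D).card := by
  have hα : 0 < α := hA ▸ card_pos_of_ne_of_card_eq hAB (hA.trans hB.symm)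
  simp [triple_isHKE_iff_general, hA, hB, hD, hα]
end

section
/- Let F be a collection of finite sets, all of the same cardinality α. Then F is a maximal hke collection if and only if F is isomorphic to the typical collection for α. -/
open Finset

/-- `F` is a maximal hke collection: it is an hke collection and no collection
properly containing it is an hke collection. -/
def IsMaxHKE (F : Finset (Finset ℕ)) : Prop :=
  (∃ α, IsHKE F α) ∧ ∀ F' : Finset (Finset ℕ), F ⊂ F' → ¬ ∃ β, IsHKE F' β

/-- The typical collection for `α`: all subsets `S` of `{1, …, 2α}` such that
for every `i ∈ {1, …, α}`, `i ∈ S ↔ i + α ∉ S`. -/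
def typicalCollection (α : ℕ) : Finset (Finset ℕ) :=
  (Finset.Icc 1 (2 * α)).powerset.filter
    (fun S => ∀ i ∈ Finset.Icc 1 α, (i ∈ S ↔ i + α ∉ S))

/-- Two collections are isomorphic: there is a bijection `g : ⋃F₁ → ⋃F₂` such that
`g[S] ∈ F₂` for every `S ∈ F₁` and `g⁻¹[S] ∈ F₁` for every `S ∈ F₂`. -/
def CollIso (F₁ F₂ : Finset (Finset ℕ)) : Prop :=
  ∃ g : ℕ → ℕ, Set.BijOn g ↑(famUnion F₁) ↑(famUnion F₂) ∧
    (∀ S ∈ F₁, S.image g ∈ F₂) ∧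
    (∀ S ∈ F₂, (famUnion F₁).filter (fun x => g x ∈ S) ∈ F₁)

/-!
Permutations of `ℕ` act on collections, isomorphism is being in the same orbit, and being hke with
a given `α` is invariant. The heart of the proof is that every nonempty hke collection `F` lies in a
relabelling of the typical collection. To see this, enlarge `⋃F` to a set `U` with `2α` elements.
The hke condition says that for each `Γ ⊆ F` as many points of `U` lie in all members of `Γ` as lie
in none. By inclusion-exclusion, as many points lie in all members of `Γ` and in none of `Δ` as the
other way round, so `U` has an injective self-map which reverses membership in every member of `F`.
On any `A ∈ F` this map pairs `A` with `U \ A`, just as `i` is paired with `i + α`.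

A maximal collection therefore equals a relabelling of the typical one. Conversely, a relabelling of
the typical collection cannot be enlarged, as no hke collection with the same `α` has more members.
-/

open scoped Pointwise

section FiniteMaps

variable {β γ τ : Type*}

theorem exists_perm_apply_eq {ι : Type*} [Finite ι] {u v : ι → β} (hu : Function.Injective u)
    (hv : Function.Injective v) : ∃ g : Equiv.Perm β, ∀ i, g (u i) = v i := by
  obtain ⟨n, ⟨e⟩⟩ := Finite.exists_equiv_fin ι
  have := Equiv.Perm.isMultiplyPretransitive β n
  obtain ⟨g, hg⟩ := MulAction.exists_smul_eq (Equiv.Perm β)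
    (e.symm.toEmbedding.trans ⟨u, hu⟩) (e.symm.toEmbedding.trans ⟨v, hv⟩)
  refine ⟨g, fun i => ?_⟩
  simpa using DFunLike.congr_fun hg (e i)

theorem exists_injOn_of_card_fiber_le [Nonempty γ] [DecidableEq τ] {X : Finset β} {Y : Finset γ}
    {f : β → τ} {k : γ → τ} (h : ∀ t, #{x ∈ X | f x = t} ≤ #{y ∈ Y | k y = t}) :
    ∃ φ : β → γ, Set.MapsTo φ X Y ∧ Set.InjOn φ X ∧ ∀ x ∈ X, k (φ x) = f x := by
  have fiberwise (t : τ) : ∃ φ : β → γ,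
      Set.MapsTo φ (X.filter (f · = t)) (Y.filter (k · = t)) ∧
        Set.InjOn φ (X.filter (f · = t)) := by
    have encard_le :
        (X.filter (f · = t) : Set β).encard ≤ (Y.filter (k · = t) : Set γ).encard := by
      simpa only [Set.encard_coe_eq_coe_finsetCard, Nat.cast_le] using h t
    exact (finite_toSet _).exists_injOn_of_encard_le encard_le
  choose φ mapsTo injOn using fiberwise
  have mem_fiber {x : β} (hx : x ∈ X) : φ (f x) x ∈ Y ∧ k (φ (f x) x) = f x :=
    mem_filter.1 (mapsTo (f x) (mem_filter.2 ⟨hx, rfl⟩))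
  refine ⟨fun x => φ (f x) x, fun x hx => (mem_fiber hx).1, fun x hx y hy hxy => ?_,
    fun x hx => (mem_fiber hx).2⟩
  have hf : f x = f y := by
    rw [← (mem_fiber hx).2, ← (mem_fiber hy).2]
    exact congrArg k hxy
  refine injOn (f y) (mem_filter.2 ⟨hx, hf⟩) (mem_filter.2 ⟨hy, rfl⟩) ?_
  simpa only [hf] using hxy

end FiniteMaps

section Cell

variable {β : Type*} [DecidableEq β] {U C : Finset β} {F Γ Δ T : Finset (Finset β)}

/-- The cell of the Venn diagram of a family of sets, within the ground set `U`, consisting of the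
points that lie in all members of `Γ` and in no member of `Δ`. -/
def cell (U : Finset β) (Γ Δ : Finset (Finset β)) : Finset β :=
  {x ∈ U | (∀ B ∈ Γ, x ∈ B) ∧ ∀ B ∈ Δ, x ∉ B}

theorem mem_cell {x : β} :
    x ∈ cell U Γ Δ ↔ x ∈ U ∧ (∀ B ∈ Γ, x ∈ B) ∧ ∀ B ∈ Δ, x ∉ B :=
  mem_filter

theorem card_cell_insert_add_card_cell_insert :
    #(cell U (insert C Γ) Δ) + #(cell U Γ (insert C Δ)) = #(cell U Γ Δ) := by
  rw [← card_filter_add_card_filter_not (s := cell U Γ Δ) (· ∈ C)]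
  congr 2 <;> ext x <;> simp only [mem_cell, mem_filter, forall_mem_insert] <;> tauto

theorem card_cell_comm (h : ∀ Γ ⊆ F, #(cell U Γ ∅) = #(cell U ∅ Γ)) (hΓ : Γ ⊆ F) (hΔ : Δ ⊆ F) :
    #(cell U Γ Δ) = #(cell U Δ Γ) := by
  induction Δ using Finset.induction_on generalizing Γ with
  | empty => exact h Γ hΓ
  | insert C Δ _ ih =>
    obtain ⟨hC, hΔ⟩ := insert_subset_iff.1 hΔ
    have same_total : #(cell U Γ Δ) = #(cell U Δ Γ) := ih hΓ hΔ
    have same_part : #(cell U (insert C Γ) Δ) = #(cell U Δ (insert C Γ)) :=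
      ih (insert_subset hC hΓ) hΔ
    have split_left := card_cell_insert_add_card_cell_insert (U := U) (C := C) (Γ := Γ) (Δ := Δ)
    have split_right := card_cell_insert_add_card_cell_insert (U := U) (C := C) (Γ := Δ) (Δ := Γ)
    lia

theorem filter_members_eq_cell (hT : T ⊆ F) :
    {x ∈ U | {B ∈ F | x ∈ B} = T} = cell U T (F \ T) := by
  ext x
  simp only [mem_filter, mem_cell, Finset.ext_iff, mem_sdiff]
  grind

theorem filter_nonmembers_eq_cell (hT : T ⊆ F) :
    {x ∈ U | {B ∈ F | x ∉ B} = T} = cell U (F \ T) T := by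
  ext x
  simp only [mem_filter, mem_cell, Finset.ext_iff, mem_sdiff]
  grind

theorem card_filter_members_eq_card_filter_nonmembers
    (h : ∀ Γ ⊆ F, #(cell U Γ ∅) = #(cell U ∅ Γ)) (T : Finset (Finset β)) :
    #{x ∈ U | {B ∈ F | x ∈ B} = T} = #{x ∈ U | {B ∈ F | x ∉ B} = T} := by
  by_cases hT : T ⊆ F
  · rw [filter_members_eq_cell hT, filter_nonmembers_eq_cell hT]
    exact card_cell_comm h hT sdiff_subset
  · rw [filter_false_of_mem, filter_false_of_mem] <;>
      exact fun x _ hx => hT (hx ▸ filter_subset _ _)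

end Cell

section Collection

variable {F G Γ : Finset (Finset ℕ)} {A U : Finset ℕ} {α x : ℕ}

theorem mem_famUnion : x ∈ famUnion Γ ↔ ∃ A ∈ Γ, x ∈ A := by
  simp only [famUnion, mem_sup, id]

theorem mem_famInter_s15 (hΓ : Γ.Nonempty) : x ∈ famInter Γ ↔ ∀ A ∈ Γ, x ∈ A := by
  obtain ⟨B, hB⟩ := hΓ
  rw [famInter, mem_filter]
  exact and_iff_right_of_imp fun h => mem_famUnion.2 ⟨B, hB, h B hB⟩

theorem subset_famUnion (hA : A ∈ F) : A ⊆ famUnion F :=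
  le_sup (f := id) hA

theorem famUnion_mono (h : Γ ⊆ F) : famUnion Γ ⊆ famUnion F :=
  sup_mono h

theorem famUnion_smul (g : Equiv.Perm ℕ) (Γ : Finset (Finset ℕ)) :
    famUnion (g • Γ) = g • famUnion Γ := by
  ext x
  rw [← inv_smul_mem_iff, mem_famUnion, mem_famUnion, smul_finset_def, exists_mem_image]
  simp only [inv_smul_mem_iff]

theorem famInter_smul (g : Equiv.Perm ℕ) (hΓ : Γ.Nonempty) :
    famInter (g • Γ) = g • famInter Γ := by
  ext x
  rw [← inv_smul_mem_iff, mem_famInter_s15 hΓ, mem_famInter_s15 hΓ.smul_finset, smul_finset_def,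
    forall_mem_image]
  simp only [inv_smul_mem_iff]

theorem IsHKE.card_eq_of_mem (hF : IsHKE F α) (hA : A ∈ F) : #A = α := by
  have h := hF.2 {A} (singleton_subset_iff.2 hA) (singleton_nonempty A)
  have union_eq : famUnion {A} = A := sup_singleton
  have inter_eq : famInter {A} = A := by
    ext x
    simp [mem_famInter_s15]
  rw [union_eq, inter_eq] at h
  lia

theorem IsHKE.smul (hF : IsHKE F α) (g : Equiv.Perm ℕ) : IsHKE (g • F) α := by
  refine ⟨hF.1, fun Γ hΓ hne => ?_⟩
  have hne' : (g⁻¹ • Γ).Nonempty := hne.smul_finset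
  have h := hF.2 (g⁻¹ • Γ) (subset_smul_finset_iff.1 hΓ) hne'
  rwa [famUnion_smul, famInter_smul _ hne, card_smul_finset, card_smul_finset] at h

theorem IsMaxHKE.eq_of_subset (hF : IsMaxHKE F) (hG : IsHKE G α) (h : F ⊆ G) : F = G := by
  by_contra hne
  exact hF.2 G (h.ssubset_of_ne hne) ⟨α, hG⟩

theorem collIso_smul (g : Equiv.Perm ℕ) (F : Finset (Finset ℕ)) : CollIso F (g • F) := by
  refine ⟨g, ?_, fun S hS => smul_mem_smul_finset hS, fun S hS => ?_⟩
  · rw [famUnion_smul, coe_smul_finset]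
    exact g.injective.injOn.bijOn_image
  · obtain ⟨T, hT, rfl⟩ := mem_smul_finset.1 hS
    have preimage_eq : {x ∈ famUnion F | g x ∈ g • T} = T := by
      ext x
      rw [mem_filter, ← Equiv.Perm.smul_def, smul_mem_smul_finset_iff]
      exact and_iff_right_of_imp fun hx => subset_famUnion hT hx
    rwa [preimage_eq]

theorem CollIso.exists_smul_eq (h : CollIso F G) : ∃ g : Equiv.Perm ℕ, g • F = G := by
  obtain ⟨f, bijOn, image_mem, preimage_mem⟩ := h
  obtain ⟨g, hg⟩ := exists_perm_apply_eq Subtype.val_injective bijOn.injOn.injective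
  have smul_eq_image {S : Finset ℕ} (hS : S ⊆ famUnion F) : g • S = S.image f :=
    image_congr fun x hx => hg ⟨x, hS hx⟩
  refine ⟨g, Subset.antisymm (fun T hT => ?_) fun T hT => ?_⟩
  · obtain ⟨S, hS, rfl⟩ := mem_smul_finset.1 hT
    rw [smul_eq_image (subset_famUnion hS)]
    exact image_mem S hS
  · refine mem_smul_finset.2 ⟨_, preimage_mem T hT, ?_⟩
    rw [smul_eq_image (filter_subset _ _)]
    ext y
    simp only [mem_image, mem_filter]
    constructor
    · rintro ⟨x, ⟨-, hx⟩, rfl⟩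
      exact hx
    · intro hy
      obtain ⟨x, hx, rfl⟩ := bijOn.surjOn (subset_famUnion hT hy)
      exact ⟨x, ⟨hx, hy⟩, rfl⟩

theorem IsHKE.card_cell_empty_comm (hF : IsHKE F α) (hFU : famUnion F ⊆ U) (hU : #U = 2 * α)
    (hΓ : Γ ⊆ F) : #(cell U Γ ∅) = #(cell U ∅ Γ) := by
  rcases Γ.eq_empty_or_nonempty with rfl | hne
  · rfl
  have hΓU : famUnion Γ ⊆ U := (famUnion_mono hΓ).trans hFU
  have inter_eq : cell U Γ ∅ = famInter Γ := by
    ext x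
    have hxU : x ∈ famInter Γ → x ∈ U := fun hx => hΓU (mem_filter.1 hx).1
    simpa [mem_cell, ← mem_famInter_s15 hne] using hxU
  have compl_eq : cell U ∅ Γ = U \ famUnion Γ := by
    ext x
    simp [mem_cell, mem_famUnion]
  have sum_eq := hF.2 Γ hΓ hne
  have compl_card := card_sdiff_add_card_eq_card hΓU
  rw [inter_eq, compl_eq]
  lia

theorem IsHKE.exists_injOn_mem_iff_notMem (hF : IsHKE F α) (hFU : famUnion F ⊆ U)
    (hU : #U = 2 * α) :
    ∃ φ : ℕ → ℕ, Set.MapsTo φ U U ∧ Set.InjOn φ U ∧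
      ∀ x ∈ U, ∀ B ∈ F, (x ∈ B ↔ φ x ∉ B) := by
  obtain ⟨φ, mapsTo, injOn, hφ⟩ := exists_injOn_of_card_fiber_le fun T =>
    (card_filter_members_eq_card_filter_nonmembers (fun _ => hF.card_cell_empty_comm hFU hU) T).le
  refine ⟨φ, mapsTo, injOn, fun x hx B hB => ?_⟩
  have h := Finset.ext_iff.1 (hφ x hx) B
  simp only [mem_filter, hB, true_and] at h
  exact h.symm

end Collection

section Typical

variable {F Γ : Finset (Finset ℕ)} {A S : Finset ℕ} {α i : ℕ}

theorem mem_typicalCollection : S ∈ typicalCollection α ↔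
    S ⊆ Icc 1 (2 * α) ∧ ∀ i ∈ Icc 1 α, (i ∈ S ↔ i + α ∉ S) := by
  rw [typicalCollection, mem_filter, mem_powerset]

theorem mem_smul_typicalCollection {g : Equiv.Perm ℕ} : S ∈ g • typicalCollection α ↔
    S ⊆ g • Icc 1 (2 * α) ∧ ∀ i ∈ Icc 1 α, (g i ∈ S ↔ g (i + α) ∉ S) := by
  rw [← inv_smul_mem_iff, mem_typicalCollection, ← subset_smul_finset_iff]
  simp only [mem_inv_smul_finset_iff, Equiv.Perm.smul_def]

theorem typicalCollection_nonempty (α : ℕ) : (typicalCollection α).Nonempty := by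
  refine ⟨Icc 1 α, mem_typicalCollection.2 ⟨Icc_subset_Icc_right (by lia), fun i hi => ?_⟩⟩
  simp only [mem_Icc] at hi ⊢
  lia

/-- The partner of `i` in the pairing of `{1, …, 2α}` that matches `i` with `i + α` for
`1 ≤ i ≤ α`. Outside `{1, …, 2α}` the value is irrelevant. -/
def partner (α i : ℕ) : ℕ := if i ≤ α then i + α else i - α

theorem partner_mem_Icc (hi : i ∈ Icc 1 (2 * α)) : partner α i ∈ Icc 1 (2 * α) := by
  grind [partner]

theorem partner_partner (hi : i ∈ Icc 1 (2 * α)) : partner α (partner α i) = i := by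
  grind [partner]

theorem mem_iff_partner_notMem (hS : S ∈ typicalCollection α) (hi : i ∈ Icc 1 (2 * α)) :
    i ∈ S ↔ partner α i ∉ S := by
  have hpair := (mem_typicalCollection.1 hS).2
  rw [mem_Icc] at hi
  by_cases hiα : i ≤ α
  · rw [partner, if_pos hiα]
    exact hpair i (mem_Icc.2 ⟨hi.1, hiα⟩)
  · rw [partner, if_neg hiα, hpair (i - α) (mem_Icc.2 (by lia)), not_not,
      Nat.sub_add_cancel (by lia)]

theorem card_famInter_of_subset_typicalCollection (hΓ : Γ ⊆ typicalCollection α)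
    (hne : Γ.Nonempty) : #(famInter Γ) = #(Icc 1 (2 * α) \ famUnion Γ) := by
  have inter_subset : famInter Γ ⊆ Icc 1 (2 * α) := fun x hx => by
    obtain ⟨S, hS⟩ := hne
    exact (mem_typicalCollection.1 (hΓ hS)).1 ((mem_famInter_s15 ⟨S, hS⟩).1 hx S hS)
  have mem_inter_iff {x : ℕ} (hx : x ∈ Icc 1 (2 * α)) :
      x ∈ famInter Γ ↔ partner α x ∉ famUnion Γ := by
    simp only [mem_famInter_s15 hne, mem_famUnion, not_exists, not_and]
    exact forall₂_congr fun S hS => mem_iff_partner_notMem (hΓ hS) hx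
  refine card_nbij' (partner α) (partner α) (fun x hx => ?_) (fun x hx => ?_)
    (fun x hx => partner_partner (inter_subset hx))
    (fun x hx => partner_partner (mem_sdiff.1 hx).1)
  · exact mem_sdiff.2 ⟨partner_mem_Icc (inter_subset hx), (mem_inter_iff (inter_subset hx)).1 hx⟩
  · obtain ⟨hx, hxΓ⟩ := mem_sdiff.1 hx
    exact (mem_inter_iff (partner_mem_Icc hx)).2 (by rwa [partner_partner hx])

theorem isHKE_typicalCollection (hα : 0 < α) : IsHKE (typicalCollection α) α := by
  refine ⟨hα, fun Γ hΓ hne => ?_⟩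
  have union_subset : famUnion Γ ⊆ Icc 1 (2 * α) :=
    Finset.sup_le fun S hS => (mem_typicalCollection.1 (hΓ hS)).1
  rw [card_famInter_of_subset_typicalCollection hΓ hne, add_comm,
    card_sdiff_add_card_eq_card union_subset, Nat.card_Icc, Nat.add_sub_cancel]

theorem exists_perm_mem_and_add_card_eq {φ : ℕ → ℕ} (hφ : Set.InjOn φ A) (hA : ∀ x ∈ A, φ x ∉ A) :
    ∃ g : Equiv.Perm ℕ, ∀ i ∈ Icc 1 #A, g i ∈ A ∧ g (i + #A) = φ (g i) := by
  have e : Icc 1 #A ≃ A := equivOfCardEq (by rw [Nat.card_Icc, Nat.add_sub_cancel])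
  let position : Icc 1 #A ⊕ Icc 1 #A → ℕ := Sum.elim (fun i => i) (fun i => i + #A)
  let label : Icc 1 #A ⊕ Icc 1 #A → ℕ := Sum.elim (fun i => e i) (fun i => φ (e i))
  have position_injective : Function.Injective position :=
    Subtype.val_injective.sumElim ((add_left_injective #A).comp Subtype.val_injective)
      fun i j => by have := mem_Icc.1 i.2; have := mem_Icc.1 j.2; lia
  have label_injective : Function.Injective label :=
    (Subtype.val_injective.comp e.injective).sumElim (hφ.injective.comp e.injective)
      fun i j hij => hA (e j) (e j).2 (hij ▸ (e i).2)
  obtain ⟨g, hg⟩ := exists_perm_apply_eq position_injective label_injective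
  refine ⟨g, fun i hi => ?_⟩
  have g_lower : g i = e ⟨i, hi⟩ := hg (.inl ⟨i, hi⟩)
  have g_upper : g (i + #A) = φ (e ⟨i, hi⟩) := hg (.inr ⟨i, hi⟩)
  rw [g_lower, g_upper]
  exact ⟨(e ⟨i, hi⟩).2, rfl⟩

theorem IsHKE.exists_subset_smul_typicalCollection (hF : IsHKE F α) (hne : F.Nonempty) :
    ∃ g : Equiv.Perm ℕ, F ⊆ g • typicalCollection α := by
  obtain ⟨A, hA⟩ := hne
  have union_card_le : #(famUnion F) ≤ 2 * α := by
    have := hF.2 F Subset.rfl ⟨A, hA⟩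
    lia
  obtain ⟨U, hFU, hU⟩ := Infinite.exists_superset_card_eq (famUnion F) (2 * α) union_card_le
  have hAU : A ⊆ U := (subset_famUnion hA).trans hFU
  obtain ⟨φ, mapsTo, injOn, hφ⟩ := hF.exists_injOn_mem_iff_notMem hFU hU
  obtain ⟨g, hg⟩ := exists_perm_mem_and_add_card_eq (injOn.mono hAU)
    fun x hx => (hφ x (hAU hx) A hA).1 hx
  rw [hF.card_eq_of_mem hA] at hg
  have relabel_subset : g • Icc 1 (2 * α) ⊆ U := by
    intro y hy
    obtain ⟨j, hj, rfl⟩ := mem_smul_finset.1 hy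
    rw [Equiv.Perm.smul_def]
    rcases le_or_gt j α with hjα | hjα
    · exact hAU (hg j (by grind)).1
    · obtain ⟨mem, eq⟩ := hg (j - α) (by grind)
      rw [Nat.sub_add_cancel hjα.le] at eq
      exact eq ▸ mapsTo (hAU mem)
  have relabel_eq : g • Icc 1 (2 * α) = U :=
    eq_of_subset_of_card_le relabel_subset (by simp [hU])
  refine ⟨g, fun B hB => mem_smul_typicalCollection.2 ⟨?_, fun i hi => ?_⟩⟩
  · exact relabel_eq ▸ (subset_famUnion hB).trans hFU
  · rw [(hg i hi).2]
    exact hφ (g i) (hAU (hg i hi).1) B hB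

theorem IsHKE.card_le_card_typicalCollection (hF : IsHKE F α) :
    #F ≤ #(typicalCollection α) := by
  rcases F.eq_empty_or_nonempty with rfl | hne
  · exact Nat.zero_le _
  · obtain ⟨g, hg⟩ := hF.exists_subset_smul_typicalCollection hne
    exact (card_le_card hg).trans_eq (card_smul_finset g _)

theorem isMaxHKE_smul_typicalCollection (hα : 0 < α) (g : Equiv.Perm ℕ) :
    IsMaxHKE (g • typicalCollection α) := by
  have hke := (isHKE_typicalCollection hα).smul g
  refine ⟨⟨α, hke⟩, fun F' hF' ⟨β, hβ⟩ => ?_⟩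
  obtain ⟨A, hA⟩ : (g • typicalCollection α).Nonempty :=
    (typicalCollection_nonempty α).smul_finset
  obtain rfl : β = α := by rw [← hβ.card_eq_of_mem (hF'.subset hA), hke.card_eq_of_mem hA]
  have := card_lt_card hF'
  have := hβ.card_le_card_typicalCollection
  have := card_smul_finset g (typicalCollection β)
  lia

theorem IsMaxHKE.nonempty (hF : IsMaxHKE F) : F.Nonempty := by
  rw [nonempty_iff_ne_empty]
  rintro rfl
  have empty_eq := hF.eq_of_subset (isHKE_typicalCollection one_pos) (empty_subset _)
  exact (typicalCollection_nonempty 1).ne_empty empty_eq.symm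

end Typical

/-- a collection `F` of finite sets, all of cardinality `α`, is a maximal hke
collection iff `F` is isomorphic to the typical collection for `α`. -/
theorem isMaxHKE_iff_iso_typical (F : Finset (Finset ℕ)) (α : ℕ) (hα : 0 < α)
    (hcard : ∀ A ∈ F, A.card = α) :
    IsMaxHKE F ↔ CollIso F (typicalCollection α) := by
  constructor
  · intro hF
    obtain ⟨A, hA⟩ := hF.nonempty
    obtain ⟨β, hβ⟩ := hF.1
    obtain rfl : β = α := by rw [← hβ.card_eq_of_mem hA, hcard A hA]
    obtain ⟨g, hg⟩ := hβ.exists_subset_smul_typicalCollection ⟨A, hA⟩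
    have hFg : F = g • typicalCollection β :=
      hF.eq_of_subset ((isHKE_typicalCollection hα).smul g) hg
    have hgF : g⁻¹ • F = typicalCollection β := by rw [hFg, inv_smul_smul]
    exact hgF ▸ collIso_smul g⁻¹ F
  · intro hiso
    obtain ⟨g, hg⟩ := hiso.exists_smul_eq
    have hFg : F = g⁻¹ • typicalCollection α := by rw [← hg, inv_smul_smul]
    exact hFg ▸ isMaxHKE_smul_typicalCollection hα g⁻¹
end
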